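/- The rewrite system R(G) for the group axioms is convergent modulo A: the rewrite relation →_{R(G)/A} on associatively flat terms is both confluent and terminating. -/

import Mathlib

/- ----------------------------------------------------------------------
  A formalization of the framework of "Congruence Closure Modulo Groups":
  variadic terms over a signature with associative symbols, rewriting
  modulo the (variadic) associativity axioms A, the rewrite system R(G)
  for the group axioms, ground flat equations, the completion inference
  system 𝓘, derivations, fairness, critical pairs modulo A, congruence
  closure modulo a set of axioms, and the Phase I / Phase II
  transformations producing S(E).
---------------------------------------------------------------------- -/

namespace CCModG

/-- Variadic first-order terms: variables (indexed by ℕ), constants from `γ`,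
and applications of function symbols from `F` to lists of terms. -/
inductive Tm (F : Type) (γ : Type) : Type
  | var : ℕ → Tm F γ
  | cst : γ → Tm F γ
  | app : F → List (Tm F γ) → Tm F γ

/-- Equations are (ordered representations of unordered) pairs of terms. -/
abbrev Eqn (F γ : Type) := Tm F γ × Tm F γ

variable {F γ C₀ : Type}

/-- Application of a substitution. -/
def Tm.subst (σ : ℕ → Tm F γ) : Tm F γ → Tm F γ
  | .var n => σ n
  | .cst c => .cst c
  | .app f ts => .app f (ts.attach.map (fun t => Tm.subst σ t.1))
decreasing_by
  have := List.sizeOf_lt_of_mem t.2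
  simp only [Tm.app.sizeOf_spec]
  omega

/-- Ground terms: terms containing no variables. -/
inductive Ground : Tm F γ → Prop
  | cst : ∀ c, Ground (.cst c)
  | app : ∀ (f : F) (ts : List (Tm F γ)), (∀ t ∈ ts, Ground t) → Ground (.app f ts)

/-- `headIs f t` holds iff `t` is headed by the function symbol `f`. -/
def headIs (f : F) (t : Tm F γ) : Prop := ∃ ts, t = Tm.app f ts

/-- Associatively flat terms (w.r.t. the set `SA` of associative symbols):
every subterm headed by an associative symbol `f` has at least two arguments,
none of which is headed by `f` again. -/
inductive Flat (SA : Set F) : Tm F γ → Prop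
  | var : ∀ n, Flat SA (.var n)
  | cst : ∀ c, Flat SA (.cst c)
  | app : ∀ (f : F) (ts : List (Tm F γ)), (∀ t ∈ ts, Flat SA t) →
      (f ∈ SA → 2 ≤ ts.length ∧ ∀ t ∈ ts, ¬ headIs f t) → Flat SA (.app f ts)

/-- The (variadic) associativity axiom scheme `A`:
`f(x₁,…,x_m, f(y₁,…,y_i), z₁,…,z_n) ≈ f(x₁,…,x_m, y₁,…,y_i, z₁,…,z_n)`
(stated for arbitrary argument terms, so it covers all instances). -/
def ASax (SA : Set F) (s t : Tm F γ) : Prop :=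
  ∃ (f : F) (us ws vs : List (Tm F γ)), f ∈ SA ∧ 2 ≤ ws.length ∧
    1 ≤ us.length + vs.length ∧
    s = .app f (us ++ (Tm.app f ws) :: vs) ∧ t = .app f (us ++ ws ++ vs)

/-- Closure of a relation under contexts (application at any position). -/
inductive Ctx (r : Tm F γ → Tm F γ → Prop) : Tm F γ → Tm F γ → Prop
  | base : ∀ {s t}, r s t → Ctx r s t
  | app : ∀ {s t} (f : F) (us vs : List (Tm F γ)), Ctx r s t →
      Ctx r (.app f (us ++ s :: vs)) (.app f (us ++ t :: vs))

/-- Equality modulo associativity `A`: the reflexive–transitive–symmetric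
closure of the associativity axioms applied at arbitrary positions. -/
def AEq (SA : Set F) : Tm F γ → Tm F γ → Prop :=
  Relation.ReflTransGen (fun s t => Ctx (ASax SA) s t ∨ Ctx (ASax SA) t s)

/-- One root rewrite step with a rule of `R` (applied to some instance). -/
def RuleStep (R : Set (Eqn F γ)) (s t : Tm F γ) : Prop :=
  ∃ l r σ, (l, r) ∈ R ∧ s = Tm.subst σ l ∧ t = Tm.subst σ r

/-- Plain rewriting with `R` (a rule applied at any position). -/
def Rew (R : Set (Eqn F γ)) : Tm F γ → Tm F γ → Prop := Ctx (RuleStep R)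

/-- Rewriting with `R` modulo associativity: `u →_{R/A} v` iff
`u ≈_A s →_R t ≈_A v` for some `s`, `t`. -/
def RewA (SA : Set F) (R : Set (Eqn F γ)) (s t : Tm F γ) : Prop :=
  ∃ s' t', AEq SA s s' ∧ Rew R s' t' ∧ AEq SA t' t

/-- A relation `r` is terminating on the terms satisfying `P`:
there is no infinite `r`-chain of such terms. -/
def TerminatingOn {α : Type*} (r : α → α → Prop) (P : α → Prop) : Prop :=
  ¬ ∃ g : ℕ → α, (∀ n, P (g n)) ∧ ∀ n, r (g n) (g (n + 1))

/-- `R/A` is confluent (modulo `A`) on the terms satisfying `P`. -/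
def ConfluentModAOn (SA : Set F) (R : Set (Eqn F γ)) (P : Tm F γ → Prop) : Prop :=
  ∀ a b c, P a → P b → P c →
    Relation.ReflTransGen (RewA SA R) a b → Relation.ReflTransGen (RewA SA R) a c →
    ∃ u v, Relation.ReflTransGen (RewA SA R) b u ∧
      Relation.ReflTransGen (RewA SA R) c v ∧ AEq SA u v

/-- The convergent rewrite system `R(G)` for the group axioms with the
associative symbol `fG`, the inverse symbol `iG` and the unit `one`:
`i(1)→1, f(x,1)→x, f(1,x)→x, i(i(x))→x, f(x,i(x))→1, f(i(x),x)→1,`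
`i(f(x,y))→f(i(y),i(x))`. -/
def RGrules (fG iG : F) (one : γ) : Set (Eqn F γ) :=
  {(.app iG [.cst one], .cst one),
   (.app fG [.var 0, .cst one], .var 0),
   (.app fG [.cst one, .var 0], .var 0),
   (.app iG [.app iG [.var 0]], .var 0),
   (.app fG [.var 0, .app iG [.var 0]], .cst one),
   (.app fG [.app iG [.var 0], .var 0], .cst one),
   (.app iG [.app fG [.var 0, .var 1]], .app fG [.app iG [.var 1], .app iG [.var 0]])}

/-- The rewrite system `R(M)` for the monoid axioms:
`f(x,1)→x` and `f(1,x)→x`. -/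
def RMrules (fG : F) (one : γ) : Set (Eqn F γ) :=
  {(.app fG [.var 0, .cst one], .var 0),
   (.app fG [.cst one, .var 0], .var 0)}

/-- Ground instances of a set of (possibly nonground) rules/equations. -/
def grInst (R : Set (Eqn F γ)) : Set (Eqn F γ) :=
  {e | ∃ l r σ, (l, r) ∈ R ∧ (∀ n, Ground (σ n)) ∧
        e = (Tm.subst σ l, Tm.subst σ r)}

/-- `gr(A)`: the ground instances of the associativity axioms. -/
def grA (SA : Set F) : Set (Eqn F γ) :=
  {e | ASax SA e.1 e.2 ∧ Ground e.1 ∧ Ground e.2}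

/-- One replacement step using a set of equations (in either direction,
at any position). -/
def EqStep (S : Set (Eqn F γ)) : Tm F γ → Tm F γ → Prop :=
  Ctx (fun a b => (a, b) ∈ S ∨ (b, a) ∈ S)

/-- `↔*_S`: the congruence (equational theory) generated by the set `S` of
(ground) equations: the reflexive–transitive closure of `EqStep S`. -/
def EqCl (S : Set (Eqn F γ)) : Tm F γ → Tm F γ → Prop :=
  Relation.ReflTransGen (EqStep S)

/-- Replacement of one occurrence of `u` by `v` (at any position). -/
def Repl (u v : Tm F γ) : Tm F γ → Tm F γ → Prop :=
  Ctx (fun a b => a = u ∧ b = v)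

/-- Terms all of whose constants come from the original set `C₀`
(the constant set is `C₀ ⊕ ℕ`, the new constants being the `Sum.inr` ones). -/
inductive InC0 : Tm F (C₀ ⊕ ℕ) → Prop
  | var : ∀ n, InC0 (.var n)
  | cst : ∀ c : C₀, InC0 (.cst (Sum.inl c))
  | app : ∀ (f : F) (ts : List (Tm F (C₀ ⊕ ℕ))), (∀ t ∈ ts, InC0 t) → InC0 (.app f ts)

/-- `fS f u` is the term `f(u)` whose argument string is `u`. -/
def fS (f : F) (u : List γ) : Tm F γ := .app f (u.map .cst)

/-- Ground flat equations (Definition 3.1): C-constant equations, D-flat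
equations, and A-flat equations. -/
def GFlatEq (SA : Set F) (e : Eqn F γ) : Prop :=
  (∃ c d : γ, e = (.cst c, .cst d)) ∨
  (∃ (g : F) (cs : List γ) (c : γ), 1 ≤ cs.length ∧ (g ∈ SA → 2 ≤ cs.length) ∧
      e = (fS g cs, .cst c)) ∨
  (∃ (f : F) (cs ds : List γ), f ∈ SA ∧ 2 ≤ cs.length ∧ 2 ≤ ds.length ∧
      e = (fS f cs, fS f ds))

/-- The total order `≻` on the constants `C = C₀ ⊕ ℕ` (Definition 3.5
(i)–(iii)): new constants are compared by index (`c_i ≻ c_j` iff `i < j`),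
every new constant is greater than every original constant, and original
constants are compared via the given precedence `prec`. -/
def cGT (prec : C₀ → ℕ) : (C₀ ⊕ ℕ) → (C₀ ⊕ ℕ) → Prop
  | Sum.inr i, Sum.inr j => i < j
  | Sum.inr _, Sum.inl _ => True
  | Sum.inl a, Sum.inl b => prec b < prec a
  | Sum.inl _, Sum.inr _ => False

/-- The length-lexicographic order on strings over `C` (longer strings are
greater; strings of equal length are compared lexicographically). -/
def strGT (prec : C₀ → ℕ) (u v : List (C₀ ⊕ ℕ)) : Prop :=
  v.length < u.length ∨
  (u.length = v.length ∧ List.Lex (fun a b => cGT prec b a) v u)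

/-- The order `≻` on ground flat terms (Definition 3.5). -/
inductive TGT (SA : Set F) (prec : C₀ → ℕ) : Tm F (C₀ ⊕ ℕ) → Tm F (C₀ ⊕ ℕ) → Prop
  | cc : ∀ {c d}, cGT prec c d → TGT SA prec (.cst c) (.cst d)
  | tc : ∀ (g : F) (ts : List (Tm F (C₀ ⊕ ℕ))) (c : C₀ ⊕ ℕ),
      TGT SA prec (.app g ts) (.cst c)
  | aa : ∀ {f u v}, f ∈ SA → strGT prec u v → TGT SA prec (fS f u) (fS f v)

/-- `IsStr f t w`: the term `t` is either a constant (with one-letter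
string `w`) or a term `f(w)` with argument string `w`. -/
def IsStr (f : F) (t : Tm F γ) (w : List γ) : Prop :=
  (∃ c, t = .cst c ∧ w = [c]) ∨ (2 ≤ w.length ∧ t = fS f w)

/-- `f̄(w)`: the term `f(w)` if `|w| ≥ 2`, and the constant itself if `w` is
a single letter. -/
def fbar (f : F) (w : List γ) : Tm F γ :=
  match w with
  | [c] => .cst c
  | w => .app f (w.map .cst)

/-- The inference system 𝓘 (Figure 1) on sets of ground flat equations, with
argument strings of associative symbols represented as lists over `C`. -/
inductive Infer (SA : Set F) (prec : C₀ → ℕ) :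
    Set (Eqn F (C₀ ⊕ ℕ)) → Set (Eqn F (C₀ ⊕ ℕ)) → Prop
  | deduce : ∀ {S : Set (Eqn F (C₀ ⊕ ℕ))} {f u1 u2 u3 s t ss ts},
      f ∈ SA → u1 ≠ [] → u2 ≠ [] → u3 ≠ [] →
      (fS f (u1 ++ u2), s) ∈ S → (fS f (u2 ++ u3), t) ∈ S →
      TGT SA prec (fS f (u1 ++ u2)) s → TGT SA prec (fS f (u2 ++ u3)) t →
      IsStr f s ss → IsStr f t ts →
      Infer SA prec S (insert (fS f (u1 ++ ts), fS f (ss ++ u3)) S)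
  | simplify : ∀ {S : Set (Eqn F (C₀ ⊕ ℕ))} {f u1 u2 u3 s t ts},
      f ∈ SA → 2 ≤ u2.length →
      (fS f (u1 ++ u2 ++ u3), s) ∈ S → (fS f u2, t) ∈ S →
      TGT SA prec (fS f u2) t → (u1 ++ u3 = [] → TGT SA prec s t) →
      IsStr f t ts →
      Infer SA prec S (insert (fbar f (u1 ++ ts ++ u3), s)
        (S \ {(fS f (u1 ++ u2 ++ u3), s)}))
  | collapse : ∀ {S : Set (Eqn F (C₀ ⊕ ℕ))} {s t u d s'},
      (s, t) ∈ S → (u, .cst d) ∈ S →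
      TGT SA prec s t → TGT SA prec u (.cst d) →
      (∀ f ts, u = .app f ts → f ∉ SA) →
      Repl u (.cst d) s s' →
      Infer SA prec S (insert (s', t) (S \ {(s, t)}))
  | compose : ∀ {S : Set (Eqn F (C₀ ⊕ ℕ))} {t c d},
      (t, .cst c) ∈ S → (.cst c, .cst d) ∈ S →
      TGT SA prec t (.cst c) → cGT prec c d →
      Infer SA prec S (insert (t, .cst d) (S \ {(t, .cst c)}))
  | delete : ∀ {S : Set (Eqn F (C₀ ⊕ ℕ))} {s},
      (s, s) ∈ S → Infer SA prec S (S \ {(s, s)})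

/-- A (possibly stuttering) derivation w.r.t. the inference system 𝓘. -/
def IsDeriv (SA : Set F) (prec : C₀ → ℕ) (D : ℕ → Set (Eqn F (C₀ ⊕ ℕ))) : Prop :=
  ∀ n, Infer SA prec (D n) (D (n + 1)) ∨ D (n + 1) = D n

/-- The set `S_∞ = ⋃_i ⋂_{j ≥ i} S_j` of persisting equations. -/
def Sinf {α : Type*} (D : ℕ → Set α) : Set α := {e | ∃ N, ∀ j, N ≤ j → e ∈ D j}

/-- Fairness of a derivation: every inference that is applicable to the
persisting equations (hence continuously enabled) is accounted for: all of
its conclusions appear somewhere in the derivation, and it removes no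
persisting equation. -/
def Fair (SA : Set F) (prec : C₀ → ℕ) (D : ℕ → Set (Eqn F (C₀ ⊕ ℕ))) : Prop :=
  ∀ S', Infer SA prec (Sinf D) S' → (S' ⊆ ⋃ k, D k) ∧ Sinf D ⊆ S'

/-- `S^≻`: the rewrite system obtained by orienting each equation of `S` by
the order `≻`. -/
def orient (SA : Set F) (prec : C₀ → ℕ) (S : Set (Eqn F (C₀ ⊕ ℕ))) :
    Set (Eqn F (C₀ ⊕ ℕ)) :=
  {e | TGT SA prec e.1 e.2 ∧ (e ∈ S ∨ (e.2, e.1) ∈ S)}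

/-- The critical pairs modulo associativity `CP_A(R)` (Definition 3.7). -/
def CPA (SA : Set F) (prec : C₀ → ℕ) (R : Set (Eqn F (C₀ ⊕ ℕ))) :
    Set (Eqn F (C₀ ⊕ ℕ)) :=
  {e | ∃ f u1 u2 u3 s t ss ts, f ∈ SA ∧ u1 ≠ [] ∧ u2 ≠ [] ∧ u3 ≠ [] ∧
      (fS f (u1 ++ u2), s) ∈ R ∧ (fS f (u2 ++ u3), t) ∈ R ∧
      IsStr f s ss ∧ IsStr f t ts ∧ e = (fS f (u1 ++ ts), fS f (ss ++ u3))} ∪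
  {e | ∃ f u1 u2 u3 s t ts, f ∈ SA ∧ 2 ≤ u2.length ∧
      (fS f (u1 ++ u2 ++ u3), s) ∈ R ∧ (fS f u2, t) ∈ R ∧
      (u1 ++ u3 = [] → TGT SA prec s t) ∧ IsStr f t ts ∧
      e = (fbar f (u1 ++ ts ++ u3), s)} ∪
  {e | ∃ s t u d s', (s, t) ∈ R ∧ (u, Tm.cst d) ∈ R ∧
      (∀ f ts, u = .app f ts → f ∉ SA) ∧ Repl u (.cst d) s s' ∧ e = (s', t)}

/-- Congruence closure `CC^F(E)` of a set `E` of ground equations over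
`T(Σ, C₀)` w.r.t. a set `Ax` of (possibly nonground) axioms: the smallest
relation containing `E`, containing every ground `C₀`-instance of the
axioms, and closed under reflexivity, symmetry, transitivity and
congruence. -/
inductive CCax (E Ax : Set (Eqn F (C₀ ⊕ ℕ))) :
    Tm F (C₀ ⊕ ℕ) → Tm F (C₀ ⊕ ℕ) → Prop
  | base : ∀ {s t}, (s, t) ∈ E → CCax E Ax s t
  | inst : ∀ {l r} (σ : ℕ → Tm F (C₀ ⊕ ℕ)), (l, r) ∈ Ax →
      (∀ n, Ground (σ n) ∧ InC0 (σ n)) → CCax E Ax (Tm.subst σ l) (Tm.subst σ r)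
  | refl : ∀ {s}, Ground s → InC0 s → CCax E Ax s s
  | symm : ∀ {s t}, CCax E Ax s t → CCax E Ax t s
  | trans : ∀ {s t u}, CCax E Ax s t → CCax E Ax t u → CCax E Ax s u
  | congr : ∀ {f : F} {ss ts : List (Tm F (C₀ ⊕ ℕ))},
      List.Forall₂ (CCax E Ax) ss ts → CCax E Ax (.app f ss) (.app f ts)

/-- The associativity axioms `A` as a set of equations. -/
def AaxS (SA : Set F) : Set (Eqn F γ) := {e | ASax SA e.1 e.2}

/-- The group axioms
`G = A ∪ {f(x,1)≈x, f(1,x)≈x, f(x,i(x))≈1, f(i(x),x)≈1}`. -/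
def GrpAxS (SA : Set F) (fG iG : F) (one : γ) : Set (Eqn F γ) :=
  AaxS SA ∪
  {(.app fG [.var 0, .cst one], .var 0), (.app fG [.cst one, .var 0], .var 0),
   (.app fG [.var 0, .app iG [.var 0]], .cst one),
   (.app fG [.app iG [.var 0], .var 0], .cst one)}

/-- The monoid axioms `M = A ∪ {f(x,1)≈x, f(1,x)≈x}`. -/
def MonAxS (SA : Set F) (fG : F) (one : γ) : Set (Eqn F γ) :=
  AaxS SA ∪
  {(.app fG [.var 0, .cst one], .var 0), (.app fG [.cst one, .var 0], .var 0)}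

/-- Evaluation of a term in an algebra with carrier `M`, interpretation `J`
of function symbols (variadic), interpretation `K` of constants, and
variable assignment `ρ`. -/
def evalTm {M : Type} (J : F → List M → M) (K : γ → M) (ρ : ℕ → M) : Tm F γ → M
  | .var n => ρ n
  | .cst c => K c
  | .app f ts => J f (ts.attach.map (fun t => evalTm J K ρ t.1))
decreasing_by
  have := List.sizeOf_lt_of_mem t.2
  simp only [Tm.app.sizeOf_spec]
  omega

/-- `s ≈_Ax t`: the equation `s ≈ t` holds in every model of the set `Ax` of
equations (so for `Ax = E ∪ G` this is the word problem relation `≈_E^G`). -/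
def SemEq (Ax : Set (Eqn F γ)) (s t : Tm F γ) : Prop :=
  ∀ (M : Type) (J : F → List M → M) (K : γ → M),
    (∀ e ∈ Ax, ∀ ρ : ℕ → M, evalTm J K ρ e.1 = evalTm J K ρ e.2) →
    ∀ ρ : ℕ → M, evalTm J K ρ s = evalTm J K ρ t

/-- `n` is a normal form of `s` w.r.t. `R/A`. -/
def IsNF (SA : Set F) (R : Set (Eqn F γ)) (s n : Tm F γ) : Prop :=
  Relation.ReflTransGen (RewA SA R) s n ∧ ∀ t, ¬ RewA SA R n t

/-- `s` and `t` have the same normal form w.r.t. `R/A` (normal forms are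
determined up to `≈_A`; flat terms represent their `A`-equivalence class). -/
def SameNF (SA : Set F) (R : Set (Eqn F γ)) (s t : Tm F γ) : Prop :=
  ∃ m n, IsNF SA R s m ∧ IsNF SA R t n ∧ AEq SA m n

/-- Proper subterms of associatively flat ground terms, including the
extension: `f(u)` is a proper subterm of `f(v u w)` for `f ∈ Σ_A`,
`|u| ≥ 2`, `|vw| ≠ 0`. -/
inductive PSubt (SA : Set F) : Tm F γ → Tm F γ → Prop
  | arg : ∀ {s : Tm F γ} {f : F} {ts : List (Tm F γ)}, s ∈ ts → PSubt SA s (.app f ts)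
  | sub : ∀ {s t : Tm F γ} {f : F} {ts : List (Tm F γ)},
      PSubt SA s t → t ∈ ts → PSubt SA s (.app f ts)
  | seg : ∀ {f : F} {us vs ws : List γ}, f ∈ SA → 2 ≤ us.length → vs ++ ws ≠ [] →
      PSubt SA (.app f (us.map .cst)) (.app f ((vs ++ us ++ ws).map .cst))

/-- `c` occurs as a constant in the term. -/
inductive CstIn (c : γ) : Tm F γ → Prop
  | cst : CstIn c (.cst c)
  | app : ∀ {t : Tm F γ} {f : F} {ts : List (Tm F γ)},
      CstIn c t → t ∈ ts → CstIn c (.app f ts)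

/- ------------------- Phase I ------------------- -/

/-- `t` is a constant. -/
def isCst (t : Tm F γ) : Prop := ∃ c, t = Tm.cst c

/-- Abstraction of a term: replace each immediate argument by (the constant
naming it under) `nm`. -/
def abst (nm : Tm F γ → γ) : Tm F γ → Tm F γ
  | .app g ts => .app g (ts.map (fun t => Tm.cst (nm t)))
  | t => t

/-- Reflexive argument-subterm relation (standard subterms). -/
inductive ArgSub : Tm F γ → Tm F γ → Prop
  | refl : ∀ t, ArgSub t t
  | arg : ∀ {s t : Tm F γ} {f : F} {ts : List (Tm F γ)},
      ArgSub s t → t ∈ ts → ArgSub s (.app f ts)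

/-- Proper (argument-)subterm. -/
def ProperArg (s t : Tm F γ) : Prop :=
  ∃ (f : F) (ts : List (Tm F γ)) (u : Tm F γ), t = Tm.app f ts ∧ u ∈ ts ∧ ArgSub s u

/-- `s'` is obtained from `s` by associative flattening followed by
`R/A`-normalization: `s →*_{R/A} u ≈_A s'` with `s'` flat and
`R/A`-irreducible. -/
def GNF (SA : Set F) (R : Set (Eqn F γ)) (s s' : Tm F γ) : Prop :=
  ∃ u, Relation.ReflTransGen (RewA SA R) s u ∧ AEq SA u s' ∧ Flat SA s' ∧
    ∀ v, ¬ RewA SA R s' v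

/-- Steps 1–2 of Phase I: associatively flatten and normalize both sides of
each equation of `E` by `R/A`, removing trivial equations. -/
def PhaseI12 (SA : Set F) (R E : Set (Eqn F γ)) : Set (Eqn F γ) :=
  {e | ∃ p ∈ E, GNF SA R p.1 e.1 ∧ GNF SA R p.2 e.2 ∧ e.1 ≠ e.2}

/-- Flattening of `E` for the semigroup case (Phase I without the
normalization step 2): only associative flattening of both sides. -/
def PhaseI1Sem (SA : Set F) (E : Set (Eqn F γ)) : Set (Eqn F γ) :=
  {e | ∃ p ∈ E, AEq SA p.1 e.1 ∧ Flat SA e.1 ∧ AEq SA p.2 e.2 ∧ Flat SA e.2}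

/-- An equation whose two sides are nonconstant and not both headed by the
same associative symbol must be split using a fresh constant in step 3. -/
def SplitCase (SA : Set F) (p : Eqn F γ) : Prop :=
  ∃ (g : F) (as_ : List (Tm F γ)) (h : F) (bs : List (Tm F γ)),
    p.1 = Tm.app g as_ ∧ p.2 = Tm.app h bs ∧ ¬(g = h ∧ g ∈ SA)

/-- The terms receiving fresh names in step 3 of Phase I: the nonconstant
proper subterms of `E₂`, together with one side of each equation that must
be split. -/
def NeedName (SA : Set F) (E₂ : Set (Eqn F γ)) : Set (Tm F γ) :=
  {t | ¬ isCst t ∧ ∃ p ∈ E₂, ProperArg t p.1 ∨ ProperArg t p.2} ∪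
  {t | ∃ p ∈ E₂, SplitCase SA p ∧ t = p.1}

/-- The defining equations introduced by flattening: `abst(t) ≈ nm(t)` for
each nonconstant proper subterm `t` of `E₂`. -/
def DefEqs (nm : Tm F γ → γ) (E₂ : Set (Eqn F γ)) : Set (Eqn F γ) :=
  {e | ∃ t, (¬ isCst t ∧ ∃ p ∈ E₂, ProperArg t p.1 ∨ ProperArg t p.2) ∧
        e = (abst nm t, .cst (nm t))}

/-- The flat equations replacing a top-level equation `p ∈ E₂`. -/
def TopOf (SA : Set F) (nm : Tm F γ → γ) (p e : Eqn F γ) : Prop :=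
  (isCst p.1 ∧ isCst p.2 ∧ e = p) ∨
  (∃ (f : F) (as_ bs : List (Tm F γ)), f ∈ SA ∧ p.1 = Tm.app f as_ ∧
      p.2 = Tm.app f bs ∧ e = (abst nm p.1, abst nm p.2)) ∨
  (∃ (g : F) (as_ : List (Tm F γ)) (c : γ), p.1 = Tm.app g as_ ∧ p.2 = Tm.cst c ∧
      e = (abst nm p.1, .cst c)) ∨
  (∃ (g : F) (as_ : List (Tm F γ)) (c : γ), p.2 = Tm.app g as_ ∧ p.1 = Tm.cst c ∧
      e = (abst nm p.2, .cst c)) ∨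
  (SplitCase SA p ∧ (e = (abst nm p.1, .cst (nm p.1)) ∨ e = (abst nm p.2, .cst (nm p.1))))

/-- All top-level equations produced from `E₂`. -/
def TopEqs (SA : Set F) (nm : Tm F γ → γ) (E₂ : Set (Eqn F γ)) : Set (Eqn F γ) :=
  {e | ∃ p ∈ E₂, TopOf SA nm p e}

/-- Step 3 of Phase I: `E'` is obtained from the flattened, normalized set
`E₂` by naming nonflat subterms with fresh constants from `C₁ ⊆ ℕ` via the
injective naming function `nm`, recording the defining equations. -/
def IsFlattening (SA : Set F) (E₂ : Set (Eqn F (C₀ ⊕ ℕ)))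
    (nm : Tm F (C₀ ⊕ ℕ) → (C₀ ⊕ ℕ)) (C1 : Set ℕ) (E' : Set (Eqn F (C₀ ⊕ ℕ))) : Prop :=
  (∀ c, nm (.cst c) = c) ∧
  (∀ t ∈ NeedName SA E₂, ∃ i ∈ C1, nm t = Sum.inr i) ∧
  (∀ s ∈ NeedName SA E₂, ∀ t ∈ NeedName SA E₂, nm s = nm t → s = t) ∧
  (∀ i ∈ C1, ∃ t ∈ NeedName SA E₂, nm t = Sum.inr i) ∧
  C1.Finite ∧
  E' = DefEqs nm E₂ ∪ TopEqs SA nm E₂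

/-- Phase I (with normalization by `Rn/A`): flatten, normalize, then flatten
into ground flat equations using fresh constants. -/
def IsPhaseI (SA : Set F) (Rn E : Set (Eqn F (C₀ ⊕ ℕ)))
    (nm : Tm F (C₀ ⊕ ℕ) → (C₀ ⊕ ℕ)) (C1 : Set ℕ) (E' : Set (Eqn F (C₀ ⊕ ℕ))) : Prop :=
  IsFlattening SA (PhaseI12 SA Rn E) nm C1 E'

/-- Phase I for the semigroup case (no normalization step 2). -/
def IsPhaseISem (SA : Set F) (E : Set (Eqn F (C₀ ⊕ ℕ)))
    (nm : Tm F (C₀ ⊕ ℕ) → (C₀ ⊕ ℕ)) (C1 : Set ℕ) (E' : Set (Eqn F (C₀ ⊕ ℕ))) : Prop :=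
  IsFlattening SA (PhaseI1Sem SA E) nm C1 E'

/- ------------------- Phase II ------------------- -/

/-- The set of constants available after introducing fresh constants
`C2 ⊆ ℕ`: all original constants together with the fresh ones. -/
def SetC (C2 : Set ℕ) : Set (C₀ ⊕ ℕ) :=
  {x | (∃ a : C₀, x = Sum.inl a) ∨ (∃ i ∈ C2, x = Sum.inr i)}

/-- `I(E')` (step 2 of Phase II). -/
def IEset (fG iG : F) (one : γ) (Ei : Set (Eqn F γ)) : Set (Eqn F γ) :=
  {(Tm.app iG [Tm.cst one], Tm.cst one)} ∪
  {e | ∃ m n : γ, (Tm.app iG [Tm.cst m], Tm.cst n) ∈ Ei ∧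
       (e = (Tm.app iG [Tm.cst n], Tm.cst m) ∨
        e = (Tm.app fG [Tm.cst m, Tm.cst n], Tm.cst one) ∨
        e = (Tm.app fG [Tm.cst n, Tm.cst m], Tm.cst one))}

/-- `U(C) = {f(c,1) ≈ c, f(1,c) ≈ c | c ∈ C}`. -/
def UCset (fG : F) (one : γ) (Cs : Set γ) : Set (Eqn F γ) :=
  {e | ∃ c ∈ Cs, e = (Tm.app fG [Tm.cst c, Tm.cst one], Tm.cst c) ∨
                 e = (Tm.app fG [Tm.cst one, Tm.cst c], Tm.cst c)}

/-- Phase II for the group axioms: fresh inverse equations are added for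
the constants lacking them, and `S(E) := E' ∪ I(E') ∪ U(C)`. -/
def IsPhaseIIG (fG iG : F) (one₀ : C₀) (C1 : Set ℕ) (E' : Set (Eqn F (C₀ ⊕ ℕ)))
    (C2 : Set ℕ) (SE : Set (Eqn F (C₀ ⊕ ℕ))) : Prop :=
  C1 ⊆ C2 ∧ C2.Finite ∧
  ∃ Ei : Set (Eqn F (C₀ ⊕ ℕ)), E' ⊆ Ei ∧
    (∀ e ∈ Ei, e ∈ E' ∨ ∃ c ∈ SetC (C₀ := C₀) C2, ∃ m ∈ C2 \ C1,
        e = (Tm.app iG [Tm.cst c], Tm.cst (Sum.inr m))) ∧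
    (∀ c ∈ SetC (C₀ := C₀) C2, c ≠ Sum.inl one₀ →
        ∃ c', (Tm.app iG [Tm.cst c], Tm.cst c') ∈ Ei ∨
              (Tm.app iG [Tm.cst c'], Tm.cst c) ∈ Ei) ∧
    SE = Ei ∪ IEset fG iG (Sum.inl one₀) Ei ∪ UCset fG (Sum.inl one₀) (SetC C2)

/-- Phase II for the monoid axioms: `S(E) := E' ∪ U(C)`. -/
def IsPhaseIIM (fG : F) (one₀ : C₀) (C1 : Set ℕ) (E' SE : Set (Eqn F (C₀ ⊕ ℕ))) : Prop :=
  SE = E' ∪ UCset fG (Sum.inl one₀) (SetC C1)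

/-- Phase II for `n` pairwise disjoint sets of group axioms. -/
def IsPhaseIIMulti (n : ℕ) (fs is_ : Fin n → F) (ones : Fin n → C₀) (C1 : Set ℕ)
    (E' : Set (Eqn F (C₀ ⊕ ℕ))) (C2 : Set ℕ) (SE : Set (Eqn F (C₀ ⊕ ℕ))) : Prop :=
  C1 ⊆ C2 ∧ C2.Finite ∧
  ∃ Ei : Set (Eqn F (C₀ ⊕ ℕ)), E' ⊆ Ei ∧
    (∀ e ∈ Ei, e ∈ E' ∨ ∃ (l : Fin n), ∃ c ∈ SetC (C₀ := C₀) C2, ∃ m ∈ C2 \ C1,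
        e = (Tm.app (is_ l) [Tm.cst c], Tm.cst (Sum.inr m))) ∧
    (∀ (l : Fin n), ∀ c ∈ SetC (C₀ := C₀) C2, c ≠ Sum.inl (ones l) →
        ∃ c', (Tm.app (is_ l) [Tm.cst c], Tm.cst c') ∈ Ei ∨
              (Tm.app (is_ l) [Tm.cst c'], Tm.cst c) ∈ Ei) ∧
    SE = Ei ∪ (⋃ l : Fin n, IEset (fs l) (is_ l) (Sum.inl (ones l)) Ei) ∪
         (⋃ l : Fin n, UCset (fs l) (Sum.inl (ones l)) (SetC C2))

/- -------- Proof complexities and the proof ordering (Def. 3.8) -------- -/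

/-- The complexity of a proof step: a triple of a multiset of terms and two
elements of `Option Tm` (`none` playing the role of `⊥`). -/
abbrev StepCmp (F C₀ : Type) :=
  Multiset (Tm F (C₀ ⊕ ℕ)) × Option (Tm F (C₀ ⊕ ℕ)) × Option (Tm F (C₀ ⊕ ℕ))

/-- Lift of an order to `Option` with `none` (⊥) minimal. -/
def optGT {α : Type*} (r : α → α → Prop) (a b : Option α) : Prop :=
  ∃ x, a = some x ∧ (b = none ∨ ∃ y, b = some y ∧ r x y)

/-- The (Dershowitz–Manna) multiset extension of an order. -/
def MSExt {α : Type*} (r : α → α → Prop) (M N : Multiset α) : Prop :=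
  ∃ M₀ X Y, X ≠ 0 ∧ M = M₀ + X ∧ N = M₀ + Y ∧ ∀ y ∈ Y, ∃ x ∈ X, r x y

/-- Comparison of step complexities: lexicographically, by the multiset
extension of `≻` on the first component and by `≻` (with `⊥` minimal) on
the second and third components. -/
def stepGT (SA : Set F) (prec : C₀ → ℕ) (a b : StepCmp F C₀) : Prop :=
  MSExt (TGT SA prec) a.1 b.1 ∨
  (a.1 = b.1 ∧ (optGT (TGT SA prec) a.2.1 b.2.1 ∨
    (a.2.1 = b.2.1 ∧ optGT (TGT SA prec) a.2.2 b.2.2)))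

/-- `IsProof SA prec S s t M`: there is a proof of `s ≈ t` using equations
of `S` and ground instances of the associativity axioms `gr(A)`, whose
complexity (the multiset of the complexities of its proof steps, per
Definition 3.8) is `M`. -/
inductive IsProof (SA : Set F) (prec : C₀ → ℕ) (S : Set (Eqn F (C₀ ⊕ ℕ))) :
    Tm F (C₀ ⊕ ℕ) → Tm F (C₀ ⊕ ℕ) → Multiset (StepCmp F C₀) → Prop
  | refl : ∀ s, IsProof SA prec S s s 0
  | stepGTc : ∀ {u v s s' t M}, ((u, v) ∈ S ∨ (v, u) ∈ S) → TGT SA prec u v →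
      Repl u v s s' → IsProof SA prec S s' t M →
      IsProof SA prec S s t (({s}, some u, some s') ::ₘ M)
  | stepLTc : ∀ {u v s s' t M}, ((u, v) ∈ S ∨ (v, u) ∈ S) → TGT SA prec v u →
      Repl u v s s' → IsProof SA prec S s' t M →
      IsProof SA prec S s t (({s'}, some v, some s) ::ₘ M)
  | stepEqc : ∀ {u s s' t M}, (u, u) ∈ S →
      Repl u u s s' → IsProof SA prec S s' t M →
      IsProof SA prec S s t (({s, s'}, none, none) ::ₘ M)
  | stepA : ∀ {u v s s' t M}, (ASax SA u v ∨ ASax SA v u) → Ground u →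
      Repl u v s s' → IsProof SA prec S s' t M →
      IsProof SA prec S s t (({s}, none, some s') ::ₘ M)

/- -------- Monoid presentations (Definition 3.17 / Prop. 3.20) -------- -/

/-- `R(E)`: the D-flat and A-flat equations of `S(E) − U(C)` containing the
interpreted associative symbol `fG`. -/
def REset (fG : F) (UC SE : Set (Eqn F γ)) : Set (Eqn F γ) :=
  {e | e ∈ SE \ UC ∧
       ((∃ (u : List γ) (c : γ), 2 ≤ u.length ∧ e = (fS fG u, Tm.cst c)) ∨
        (∃ u v : List γ, 2 ≤ u.length ∧ 2 ≤ v.length ∧ e = (fS fG u, fS fG v)))}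

/-- `C(R)`: the constants appearing in `R(E)`, except the unit. -/
def CRset (one : γ) (RE : Set (Eqn F γ)) : Set γ :=
  {c | c ≠ one ∧ ∃ e ∈ RE, CstIn c e.1 ∨ CstIn c e.2}

/-- The string corresponding to one side of an equation of `R(E)`: the unit
becomes the empty string, any other constant a one-letter string, and a
term `f(u)` the string `u`. -/
def SideStr (fG : F) (one : γ) (t : Tm F γ) (w : List γ) : Prop :=
  (t = Tm.cst one ∧ w = []) ∨ (∃ c, c ≠ one ∧ t = Tm.cst c ∧ w = [c]) ∨
  (∃ u, t = fS fG u ∧ w = u)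

/-- The string relations of the monoid presentation `<C(R) | R(E)>`. -/
def RelOf (fG : F) (one : γ) (RE : Set (Eqn F γ)) : Set (List γ × List γ) :=
  {r | ∃ (u : List γ) (t : Tm F γ) (w : List γ),
        (fS fG u, t) ∈ RE ∧ SideStr fG one t w ∧ r = (u, w)}

/-- The congruence on strings generated by a set of string relations. -/
inductive StrEq (Rel : Set (List γ × List γ)) : List γ → List γ → Prop
  | rel : ∀ {u v} (x y : List γ), (u, v) ∈ Rel → StrEq Rel (x ++ u ++ y) (x ++ v ++ y)
  | refl : ∀ u, StrEq Rel u u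
  | symm : ∀ {u v}, StrEq Rel u v → StrEq Rel v u
  | trans : ∀ {u v w}, StrEq Rel u v → StrEq Rel v w → StrEq Rel u w

/-- The monoid presentation (with generators `X` and string relations `Rel`)
presents a finite group: there are finitely many congruence classes of
strings over `X`, and every string over `X` has a two-sided inverse. -/
def PresentsFiniteGroup (Rel : Set (List γ × List γ)) (X : Set γ) : Prop :=
  (∃ reps : Finset (List γ), ∀ u : List γ, (∀ a ∈ u, a ∈ X) →
      ∃ v ∈ reps, StrEq Rel u v) ∧
  (∀ u : List γ, (∀ a ∈ u, a ∈ X) →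
      ∃ v : List γ, (∀ a ∈ v, a ∈ X) ∧ StrEq Rel (u ++ v) [] ∧ StrEq Rel (v ++ u) [])

/-!
Both halves interpret terms in an algebra.

*Termination.*  Give variables and constants weight 2, let an associative symbol add the weights of
its arguments, and let every other symbol send arguments of total weight `m` to `2 + m²`.  Addition
is associative, so weight is constant on `A`-classes, and every rule of `R(G)` decreases it.

*Confluence.*  Evaluate terms in the free group whose generators are terms: `fG` multiplies, `iG`
inverts, and any other application becomes the generator obtained by normalizing its arguments.
The axioms `A` and the rules of `R(G)` are valid in this algebra, so the value is invariant under
rewriting.  Conversely every term rewrites to the term spelled by the reduced word of its value: the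
cancellation rules carry out free reduction and the rules for `iG` invert words.  Hence terms with a
common ancestor rewrite to the same term.
-/

open Relation

/-! ### Evaluation and rewriting modulo associativity -/

@[elab_as_elim]
theorem Tm.induction {p : Tm F γ → Prop} (var : ∀ n, p (.var n)) (cst : ∀ c, p (.cst c))
    (app : ∀ f ts, (∀ t ∈ ts, p t) → p (.app f ts)) : ∀ t, p t
  | .var n => var n
  | .cst c => cst c
  | .app f ts => app f ts fun t _ => Tm.induction var cst app t

theorem Tm.subst_app (σ : ℕ → Tm F γ) (f : F) (ts : List (Tm F γ)) :
    (Tm.app f ts).subst σ = .app f (ts.map (Tm.subst σ)) := by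
  rw [Tm.subst, List.attach_map_val]

theorem AEq.symm {SA : Set F} {s t : Tm F γ} (h : AEq SA s t) : AEq SA t s :=
  ReflTransGen.mono (fun _ _ => Or.symm) _ _ (ReflTransGen.swap _ _ h)

theorem AEq.of_ASax {SA : Set F} {s t : Tm F γ} (h : ASax SA s t) : AEq SA s t :=
  .single (.inl (.base h))

section Evaluation

variable {M : Type} {J : F → List M → M} {K : γ → M} {ρ : ℕ → M}

theorem evalTm_app (f : F) (ts : List (Tm F γ)) :
    evalTm J K ρ (.app f ts) = J f (ts.map (evalTm J K ρ)) := by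
  rw [evalTm, List.attach_map_val]

theorem evalTm_eq_of_ctx {r : Tm F γ → Tm F γ → Prop}
    (hr : ∀ s t, r s t → evalTm J K ρ s = evalTm J K ρ t) {s t : Tm F γ} (h : Ctx r s t) :
    evalTm J K ρ s = evalTm J K ρ t := by
  induction h with
  | base h => exact hr _ _ h
  | app f us vs _ ih => simp only [evalTm_app, List.map_append, List.map_cons, ih]

theorem evalTm_lt_of_ctx [LT M]
    (hJ : ∀ f us vs (a b : M), a < b → J f (us ++ a :: vs) < J f (us ++ b :: vs))
    {r : Tm F γ → Tm F γ → Prop} (hr : ∀ s t, r s t → evalTm J K ρ t < evalTm J K ρ s)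
    {s t : Tm F γ} (h : Ctx r s t) : evalTm J K ρ t < evalTm J K ρ s := by
  induction h with
  | base h => exact hr _ _ h
  | app f us vs _ ih =>
    simp only [evalTm_app, List.map_append, List.map_cons]
    exact hJ f _ _ _ _ ih

theorem evalTm_eq_of_aeq {SA : Set F}
    (hA : ∀ s t, ASax SA s t → evalTm J K ρ s = evalTm J K ρ t) {s t : Tm F γ}
    (h : AEq SA s t) : evalTm J K ρ s = evalTm J K ρ t := by
  induction h with
  | refl => rfl
  | tail _ hstep ih =>
    rcases hstep with hstep | hstep
    · exact ih.trans (evalTm_eq_of_ctx hA hstep)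
    · exact ih.trans (evalTm_eq_of_ctx hA hstep).symm

theorem evalTm_eq_of_rewA {SA : Set F} {R : Set (Eqn F γ)}
    (hA : ∀ s t, ASax SA s t → evalTm J K ρ s = evalTm J K ρ t)
    (hR : ∀ s t, RuleStep R s t → evalTm J K ρ s = evalTm J K ρ t) {s t : Tm F γ}
    (h : RewA SA R s t) : evalTm J K ρ s = evalTm J K ρ t := by
  obtain ⟨s', t', hs, hst, ht⟩ := h
  calc evalTm J K ρ s
    _ = evalTm J K ρ s' := evalTm_eq_of_aeq hA hs
    _ = evalTm J K ρ t' := evalTm_eq_of_ctx hR hst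
    _ = evalTm J K ρ t := evalTm_eq_of_aeq hA ht

theorem evalTm_lt_of_rewA [LT M] {SA : Set F} {R : Set (Eqn F γ)}
    (hJ : ∀ f us vs (a b : M), a < b → J f (us ++ a :: vs) < J f (us ++ b :: vs))
    (hA : ∀ s t, ASax SA s t → evalTm J K ρ s = evalTm J K ρ t)
    (hR : ∀ s t, RuleStep R s t → evalTm J K ρ t < evalTm J K ρ s) {s t : Tm F γ}
    (h : RewA SA R s t) : evalTm J K ρ t < evalTm J K ρ s := by
  obtain ⟨s', t', hs, hst, ht⟩ := h
  rw [evalTm_eq_of_aeq hA hs, ← evalTm_eq_of_aeq hA ht]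
  exact evalTm_lt_of_ctx hJ hR hst

end Evaluation

theorem terminatingOn_of_lt {α β : Type*} [Preorder β] [WellFoundedLT β] {r : α → α → Prop}
    (μ : α → β) (hμ : ∀ a b, r a b → μ b < μ a) (P : α → Prop) : TerminatingOn r P := by
  rintro ⟨g, -, hg⟩
  exact not_strictAnti_of_wellFoundedLT (μ ∘ g)
    (strictAnti_nat_of_succ_lt fun n => hμ _ _ (hg n))

/-- Reduction modulo `A`: any number of rewrite steps and of associativity steps in either
direction.  Unlike `→*_{R/A}`, it contains `≈_A`. -/
def ModRed (SA : Set F) (R : Set (Eqn F γ)) : Tm F γ → Tm F γ → Prop :=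
  ReflTransGen fun s t => Rew R s t ∨ Ctx (ASax SA) s t ∨ Ctx (ASax SA) t s

namespace ModRed

variable {SA : Set F} {R : Set (Eqn F γ)} {s t u : Tm F γ}

protected theorem refl (s : Tm F γ) : ModRed SA R s s := ReflTransGen.refl

protected theorem trans (h : ModRed SA R s t) (h' : ModRed SA R t u) : ModRed SA R s u :=
  ReflTransGen.trans h h'

instance : Trans (ModRed SA R) (ModRed SA R) (ModRed SA R) := ⟨ModRed.trans⟩

theorem of_ruleStep (h : RuleStep R s t) : ModRed SA R s t := .single (.inl (.base h))

theorem of_aeq (h : AEq SA s t) : ModRed SA R s t :=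
  ReflTransGen.mono (fun _ _ => Or.inr) _ _ h

theorem ctx (f : F) (us vs : List (Tm F γ)) (h : ModRed SA R s t) :
    ModRed SA R (.app f (us ++ s :: vs)) (.app f (us ++ t :: vs)) :=
  ReflTransGen.lift (fun x => Tm.app f (us ++ x :: vs))
    (fun _ _ => Or.imp (.app f us vs) (Or.imp (.app f us vs) (.app f us vs))) _ _ h

theorem app_congr (f : F) {ss ts : List (Tm F γ)} (h : List.Forall₂ (ModRed SA R) ss ts) :
    ModRed SA R (.app f ss) (.app f ts) := by
  suffices H : ∀ us, ModRed SA R (.app f (us ++ ss)) (.app f (us ++ ts)) from H []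
  induction h with
  | nil => exact fun us => .refl _
  | @cons a b ss ts hab _ ih =>
    intro us
    refine (ctx f us ss hab).trans ?_
    simpa only [List.append_assoc, List.singleton_append] using ih (us ++ [b])

theorem app_congr_two (f : F) {s' t' : Tm F γ} (hs : ModRed SA R s s') (ht : ModRed SA R t t') :
    ModRed SA R (.app f [s, t]) (.app f [s', t']) :=
  app_congr f (.cons hs (.cons ht .nil))

theorem exists_rewA_aeq (h : ModRed SA R s t) :
    ∃ u, ReflTransGen (RewA SA R) s u ∧ AEq SA u t := by
  induction h with
  | refl => exact ⟨s, .refl, .refl⟩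
  | tail _ hstep ih =>
    obtain ⟨u, hsu, hut⟩ := ih
    rcases hstep with hrew | hassoc
    · exact ⟨_, hsu.tail ⟨_, _, hut, hrew, .refl⟩, .refl⟩
    · exact ⟨u, hsu, hut.tail hassoc⟩

end ModRed

theorem confluentModAOn_of_normalizer {SA : Set F} {R : Set (Eqn F γ)} (nf : Tm F γ → Tm F γ)
    (hinv : ∀ s t, RewA SA R s t → nf s = nf t) (hred : ∀ t, ModRed SA R t (nf t))
    (P : Tm F γ → Prop) : ConfluentModAOn SA R P := by
  have hinv' : ∀ s t, ReflTransGen (RewA SA R) s t → nf s = nf t := fun s t h => by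
    induction h with
    | refl => rfl
    | tail _ hstep ih => exact ih.trans (hinv _ _ hstep)
  intro a b c _ _ _ hab hac
  obtain ⟨u, hbu, hu⟩ := (hred b).exists_rewA_aeq
  obtain ⟨v, hcv, hv⟩ := (hred c).exists_rewA_aeq
  rw [← hinv' a b hab] at hu
  rw [← hinv' a c hac] at hv
  exact ⟨u, v, hbu, hcv, ReflTransGen.trans hu hv.symm⟩

/-- The instances of the rules of `R(G)`, with the substitution carried out. -/
inductive GroupStep (fG iG : F) (one : γ) : Tm F γ → Tm F γ → Prop
  | inv_one : GroupStep fG iG one (.app iG [.cst one]) (.cst one)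
  | mul_one (x : Tm F γ) : GroupStep fG iG one (.app fG [x, .cst one]) x
  | one_mul (x : Tm F γ) : GroupStep fG iG one (.app fG [.cst one, x]) x
  | inv_inv (x : Tm F γ) : GroupStep fG iG one (.app iG [.app iG [x]]) x
  | mul_inv (x : Tm F γ) : GroupStep fG iG one (.app fG [x, .app iG [x]]) (.cst one)
  | inv_mul (x : Tm F γ) : GroupStep fG iG one (.app fG [.app iG [x], x]) (.cst one)
  | inv_mul_rev (x y : Tm F γ) : GroupStep fG iG one
      (.app iG [.app fG [x, y]]) (.app fG [.app iG [y], .app iG [x]])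

theorem ruleStep_RGrules_iff {fG iG : F} {one : γ} {s t : Tm F γ} :
    RuleStep (RGrules fG iG one) s t ↔ GroupStep fG iG one s t := by
  constructor
  · rintro ⟨l, r, σ, hR, rfl, rfl⟩
    simp only [RGrules, Set.mem_insert_iff, Set.mem_singleton_iff, Prod.mk.injEq] at hR
    rcases hR with ⟨rfl, rfl⟩ | ⟨rfl, rfl⟩ | ⟨rfl, rfl⟩ | ⟨rfl, rfl⟩ | ⟨rfl, rfl⟩ | ⟨rfl, rfl⟩ |
      ⟨rfl, rfl⟩ <;>
      simp only [Tm.subst_app, Tm.subst, List.map_cons, List.map_nil] <;> constructor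
  · intro h
    let σ (x y : Tm F γ) : ℕ → Tm F γ := fun n => if n = 0 then x else y
    cases h with
    | inv_one => refine ⟨_, _, .var, .inl rfl, ?_, ?_⟩ <;> simp [Tm.subst_app, Tm.subst]
    | mul_one =>
      refine ⟨_, _, σ t t, .inr (.inl rfl), ?_, ?_⟩ <;> simp [Tm.subst_app, Tm.subst, σ]
    | one_mul =>
      refine ⟨_, _, σ t t, .inr (.inr (.inl rfl)), ?_, ?_⟩ <;>
        simp [Tm.subst_app, Tm.subst, σ]
    | inv_inv =>
      refine ⟨_, _, σ t t, .inr (.inr (.inr (.inl rfl))), ?_, ?_⟩ <;>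
        simp [Tm.subst_app, Tm.subst, σ]
    | mul_inv x =>
      refine ⟨_, _, σ x x, .inr (.inr (.inr (.inr (.inl rfl)))), ?_, ?_⟩ <;>
        simp [Tm.subst_app, Tm.subst, σ]
    | inv_mul x =>
      refine ⟨_, _, σ x x, .inr (.inr (.inr (.inr (.inr (.inl rfl))))), ?_, ?_⟩ <;>
        simp [Tm.subst_app, Tm.subst, σ]
    | inv_mul_rev x y =>
      refine ⟨_, _, σ x y, .inr (.inr (.inr (.inr (.inr (.inr rfl))))), ?_, ?_⟩ <;>
        simp [Tm.subst_app, Tm.subst, σ]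

/-! ### Termination -/

section Weight

open scoped Classical in
/-- The interpretation of the function symbols on weights.  It is additive only on applications of
an associative symbol to at least two arguments, the only ones that occur in an axiom of `A`. -/
noncomputable def weightOp (SA : Set F) (f : F) (ws : List ℕ) : ℕ :=
  if f ∈ SA ∧ 2 ≤ ws.length then ws.sum else 2 + ws.sum ^ 2

/-- The weight of a term, the measure for termination. -/
noncomputable def weight (SA : Set F) : Tm F γ → ℕ :=
  evalTm (weightOp SA) (fun _ => 2) (fun _ => 2)

theorem weight_cst (SA : Set F) (c : γ) : weight SA (.cst c : Tm F γ) = 2 := by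
  rw [weight, evalTm]

theorem weight_app (SA : Set F) (f : F) (ts : List (Tm F γ)) :
    weight SA (.app f ts) = weightOp SA f (ts.map (weight SA)) := evalTm_app f ts

theorem two_le_weight (SA : Set F) (t : Tm F γ) : 2 ≤ weight SA t := by
  induction t using Tm.induction with
  | var n => rw [weight, evalTm]
  | cst c => rw [weight_cst]
  | app f ts ih =>
    rw [weight_app, weightOp]
    split_ifs with h
    · match ts, h.2 with
      | t :: ts, _ =>
        exact (ih t List.mem_cons_self).trans (List.le_sum_of_mem (by simp))
    · omega

theorem weightOp_lt_weightOp (SA : Set F) (f : F) (us vs : List ℕ) (a b : ℕ) (hab : a < b) :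
    weightOp SA f (us ++ a :: vs) < weightOp SA f (us ++ b :: vs) := by
  have hsum : (us ++ a :: vs).sum < (us ++ b :: vs).sum := by simpa using hab
  have hlen : (us ++ a :: vs).length = (us ++ b :: vs).length := by simp
  unfold weightOp
  rw [hlen]
  split_ifs
  · exact hsum
  · gcongr

theorem weight_eq_of_ASax {SA : Set F} (s t : Tm F γ) (h : ASax SA s t) :
    weight SA s = weight SA t := by
  obtain ⟨f, us, ws, vs, hf, hws, huv, rfl, rfl⟩ := h
  have hin : 2 ≤ us.length + (vs.length + 1) := by omega
  have hout : 2 ≤ us.length + (ws.length + vs.length) := by omega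
  simp [weight_app, weightOp, hf, hws, hin, hout]

theorem GroupStep.weight_lt {SA : Set F} {fG iG : F} {one : γ} (hfG : fG ∈ SA) {s t : Tm F γ}
    (h : GroupStep fG iG one s t) : weight SA t < weight SA s := by
  have hmul (x y : Tm F γ) : weight SA (.app fG [x, y]) = weight SA x + weight SA y := by
    simp [weight_app, weightOp, hfG]
  have hinv (x : Tm F γ) : weight SA (.app iG [x]) = 2 + weight SA x ^ 2 := by
    simp [weight_app, weightOp]
  cases h with
  | inv_one => simp [hinv, weight_cst]
  | mul_one | one_mul => simp [hmul, weight_cst]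
  | inv_inv => simp only [hinv]; nlinarith [two_le_weight SA t]
  | mul_inv x | inv_mul x =>
    have := two_le_weight SA x
    simp only [hmul, hinv, weight_cst]
    omega
  | inv_mul_rev x y =>
    simp only [hmul, hinv]
    nlinarith [two_le_weight SA x, two_le_weight SA y]

theorem terminatingOn_RGrules {SA : Set F} {fG : F} (iG : F) (one : γ) (hfG : fG ∈ SA)
    (P : Tm F γ → Prop) : TerminatingOn (RewA SA (RGrules fG iG one)) P :=
  terminatingOn_of_lt (weight SA) (fun _ _ =>
    evalTm_lt_of_rewA (weightOp_lt_weightOp SA) weight_eq_of_ASax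
      fun _ _ h => (ruleStep_RGrules_iff.1 h).weight_lt hfG) P

end Weight

/-! ### Terms spelled by words -/

/-- The product of a list of terms: `f(ts)` for at least two factors, the factor itself for one,
and the unit for none. -/
def prodTm (f : F) (one : γ) : List (Tm F γ) → Tm F γ
  | [] => .cst one
  | [t] => t
  | ts => .app f ts

theorem prodTm_of_two_le (f : F) (one : γ) :
    ∀ {ts : List (Tm F γ)}, 2 ≤ ts.length → prodTm f one ts = .app f ts
  | _ :: _ :: _, _ => rfl

theorem aeq_prodTm_append {SA : Set F} {f : F} (hf : f ∈ SA) (one : γ) :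
    ∀ {ss ts : List (Tm F γ)}, ss ≠ [] → ts ≠ [] →
      AEq SA (.app f [prodTm f one ss, prodTm f one ts]) (prodTm f one (ss ++ ts))
  | [s], [t], _, _ => .refl
  | [s], t₁ :: t₂ :: ts, _, _ =>
    .of_ASax ⟨f, [s], t₁ :: t₂ :: ts, [], hf, by simp, by simp, rfl, by simp [prodTm]⟩
  | s₁ :: s₂ :: ss, [t], _, _ =>
    .of_ASax ⟨f, [], s₁ :: s₂ :: ss, [t], hf, by simp, by simp, rfl, by simp [prodTm]⟩
  | s₁ :: s₂ :: ss, t₁ :: t₂ :: ts, _, _ =>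
    ReflTransGen.trans
      (AEq.of_ASax ⟨f, [], s₁ :: s₂ :: ss, [.app f (t₁ :: t₂ :: ts)], hf, by simp, by simp,
        rfl, rfl⟩)
      (AEq.of_ASax ⟨f, s₁ :: s₂ :: ss, t₁ :: t₂ :: ts, [], hf, by simp, by simp,
        rfl, by simp [prodTm]⟩)

/-- The term spelled by a letter of a word over terms. -/
def letterTm (iG : F) : Tm F γ × Bool → Tm F γ
  | (t, true) => t
  | (t, false) => .app iG [t]

/-- The term spelled by a word over terms. -/
def wordTm (fG iG : F) (one : γ) (l : List (Tm F γ × Bool)) : Tm F γ :=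
  prodTm fG one (l.map (letterTm iG))

open scoped Classical in
/-- The term spelled by the reduced word of an element of the free group over terms. -/
noncomputable def freeGroupTm (fG iG : F) (one : γ) (w : FreeGroup (Tm F γ)) : Tm F γ :=
  wordTm fG iG one w.toWord

theorem freeGroupTm_of (fG iG : F) (one : γ) (t : Tm F γ) :
    freeGroupTm fG iG one (.of t) = t := by
  simp [freeGroupTm, wordTm, prodTm, letterTm]

theorem freeGroupTm_one (fG iG : F) (one : γ) : freeGroupTm fG iG one 1 = .cst one := by
  simp [freeGroupTm, wordTm, prodTm]

section Reduction

variable {SA : Set F} {fG iG : F} {one : γ}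

local infix:50 "⇝" => ModRed SA (RGrules fG iG one)

theorem GroupStep.modRed {s t : Tm F γ} (h : GroupStep fG iG one s t) : s ⇝ t :=
  .of_ruleStep (ruleStep_RGrules_iff.2 h)

theorem modRed_prodTm_append (hfG : fG ∈ SA) (ss ts : List (Tm F γ)) :
    .app fG [prodTm fG one ss, prodTm fG one ts] ⇝ prodTm fG one (ss ++ ts) := by
  by_cases hss : ss = []
  · subst hss
    exact (GroupStep.one_mul _).modRed
  by_cases hts : ts = []
  · subst hts
    rw [List.append_nil]
    exact (GroupStep.mul_one _).modRed
  exact .of_aeq (aeq_prodTm_append hfG one hss hts)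

theorem modRed_prodTm_append_congr_left (hfG : fG ∈ SA) {ss ss' : List (Tm F γ)} (hss : ss ≠ [])
    (h : prodTm fG one ss ⇝ prodTm fG one ss') (ts : List (Tm F γ)) :
    prodTm fG one (ss ++ ts) ⇝ prodTm fG one (ss' ++ ts) := by
  by_cases hts : ts = []
  · simpa only [hts, List.append_nil] using h
  calc prodTm fG one (ss ++ ts)
    _ ⇝ .app fG [prodTm fG one ss, prodTm fG one ts] :=
      .of_aeq (aeq_prodTm_append hfG one hss hts).symm
    _ ⇝ .app fG [prodTm fG one ss', prodTm fG one ts] := .app_congr_two fG h (.refl _)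
    _ ⇝ prodTm fG one (ss' ++ ts) := modRed_prodTm_append hfG ss' ts

theorem modRed_prodTm_append_congr_right (hfG : fG ∈ SA) {ts ts' : List (Tm F γ)} (hts : ts ≠ [])
    (h : prodTm fG one ts ⇝ prodTm fG one ts') (ss : List (Tm F γ)) :
    prodTm fG one (ss ++ ts) ⇝ prodTm fG one (ss ++ ts') := by
  by_cases hss : ss = []
  · simpa only [hss, List.nil_append] using h
  calc prodTm fG one (ss ++ ts)
    _ ⇝ .app fG [prodTm fG one ss, prodTm fG one ts] :=
      .of_aeq (aeq_prodTm_append hfG one hss hts).symm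
    _ ⇝ .app fG [prodTm fG one ss, prodTm fG one ts'] := .app_congr_two fG (.refl _) h
    _ ⇝ prodTm fG one (ss ++ ts') := modRed_prodTm_append hfG ss ts'

theorem modRed_wordTm_of_step (hfG : fG ∈ SA) {l l' : List (Tm F γ × Bool)}
    (h : FreeGroup.Red.Step l l') : wordTm fG iG one l ⇝ wordTm fG iG one l' := by
  obtain @⟨l₁, l₂, x, b⟩ := h
  have hcancel : prodTm fG one [letterTm iG (x, b), letterTm iG (x, !b)] ⇝ prodTm fG one [] := by
    cases b
    · exact (GroupStep.inv_mul x).modRed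
    · exact (GroupStep.mul_inv x).modRed
  simpa only [wordTm, List.map_append, List.map_cons, List.cons_append, List.nil_append] using
    modRed_prodTm_append_congr_right hfG (by simp)
      (modRed_prodTm_append_congr_left hfG (by simp) hcancel (l₂.map (letterTm iG)))
      (l₁.map (letterTm iG))

theorem modRed_wordTm_of_red (hfG : fG ∈ SA) {l l' : List (Tm F γ × Bool)}
    (h : FreeGroup.Red l l') : wordTm fG iG one l ⇝ wordTm fG iG one l' := by
  induction h with
  | refl => exact .refl _
  | tail _ hstep ih => exact ih.trans (modRed_wordTm_of_step hfG hstep)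

theorem modRed_wordTm_append (hfG : fG ∈ SA) (l l' : List (Tm F γ × Bool)) :
    .app fG [wordTm fG iG one l, wordTm fG iG one l'] ⇝ wordTm fG iG one (l ++ l') := by
  rw [wordTm, wordTm, wordTm, List.map_append]
  exact modRed_prodTm_append hfG _ _

theorem modRed_wordTm_invRev (hfG : fG ∈ SA) (l : List (Tm F γ × Bool)) :
    .app iG [wordTm fG iG one l] ⇝ wordTm fG iG one (FreeGroup.invRev l) := by
  have hletter (x : Tm F γ × Bool) :
      .app iG [letterTm iG x] ⇝ wordTm fG iG one (FreeGroup.invRev [x]) := by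
    obtain ⟨t, _ | _⟩ := x
    · exact (GroupStep.inv_inv t).modRed
    · exact .refl _
  induction l with
  | nil => exact GroupStep.inv_one.modRed
  | cons x l ih =>
    by_cases hl : l = []
    · subst hl
      exact hletter x
    have hsplit : wordTm fG iG one (x :: l) ⇝ .app fG [letterTm iG x, wordTm fG iG one l] :=
      .of_aeq (aeq_prodTm_append hfG one (ss := [letterTm iG x]) (by simp) (by simpa using hl)).symm
    rw [FreeGroup.invRev_cons]
    calc Tm.app iG [wordTm fG iG one (x :: l)]
      _ ⇝ .app iG [.app fG [letterTm iG x, wordTm fG iG one l]] := hsplit.ctx iG [] []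
      _ ⇝ .app fG [.app iG [wordTm fG iG one l], .app iG [letterTm iG x]] :=
        (GroupStep.inv_mul_rev _ _).modRed
      _ ⇝ .app fG [wordTm fG iG one (FreeGroup.invRev l),
            wordTm fG iG one (FreeGroup.invRev [x])] := .app_congr_two fG ih (hletter x)
      _ ⇝ wordTm fG iG one (FreeGroup.invRev l ++ FreeGroup.invRev [x]) :=
        modRed_wordTm_append hfG _ _

theorem modRed_freeGroupTm_inv (hfG : fG ∈ SA) (w : FreeGroup (Tm F γ)) :
    .app iG [freeGroupTm fG iG one w] ⇝ freeGroupTm fG iG one w⁻¹ := by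
  classical
  rw [freeGroupTm, freeGroupTm, FreeGroup.toWord_inv]
  exact modRed_wordTm_invRev hfG _

theorem modRed_freeGroupTm_mul (hfG : fG ∈ SA) (v w : FreeGroup (Tm F γ)) :
    .app fG [freeGroupTm fG iG one v, freeGroupTm fG iG one w] ⇝ freeGroupTm fG iG one (v * w) := by
  classical
  rw [freeGroupTm, freeGroupTm, freeGroupTm, FreeGroup.toWord_mul]
  exact (modRed_wordTm_append hfG _ _).trans (modRed_wordTm_of_red hfG FreeGroup.reduce.red)

theorem modRed_freeGroupTm_prod (hfG : fG ∈ SA) (ws : List (FreeGroup (Tm F γ))) :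
    prodTm fG one (ws.map (freeGroupTm fG iG one)) ⇝ freeGroupTm fG iG one ws.prod := by
  induction ws with
  | nil =>
    rw [List.prod_nil, freeGroupTm_one]
    exact .refl _
  | cons w ws ih =>
    by_cases hws : ws = []
    · subst hws
      rw [List.prod_singleton]
      exact .refl _
    rw [List.prod_cons]
    calc prodTm fG one ((w :: ws).map (freeGroupTm fG iG one))
      _ ⇝ .app fG [freeGroupTm fG iG one w, prodTm fG one (ws.map (freeGroupTm fG iG one))] :=
        .of_aeq (aeq_prodTm_append hfG one (ss := [freeGroupTm fG iG one w]) (by simp)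
          (by simpa using hws)).symm
      _ ⇝ .app fG [freeGroupTm fG iG one w, freeGroupTm fG iG one ws.prod] :=
        .app_congr_two fG (.refl _) ih
      _ ⇝ freeGroupTm fG iG one (w * ws.prod) := modRed_freeGroupTm_mul hfG w ws.prod

end Reduction

/-! ### Evaluation in the free group -/

open scoped Classical in
/-- The arguments that `t` contributes when it is flattened below the associative symbol `g`. -/
noncomputable def splice (g : F) : Tm F γ → List (Tm F γ)
  | .app f ts => if f = g ∧ 2 ≤ ts.length then ts else [.app f ts]
  | t => [t]

theorem splice_app {g : F} {ts : List (Tm F γ)} (hts : 2 ≤ ts.length) :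
    splice g (.app g ts) = ts := by
  rw [splice, if_pos ⟨rfl, hts⟩]

theorem splice_eq_singleton_or (g : F) (t : Tm F γ) :
    splice g t = [t] ∨ 2 ≤ (splice g t).length ∧ t = .app g (splice g t) := by
  match t with
  | .var n => exact .inl rfl
  | .cst c => exact .inl rfl
  | .app f ts =>
    by_cases h : f = g ∧ 2 ≤ ts.length
    · obtain ⟨rfl, hts⟩ := h
      rw [splice_app hts]
      exact .inr ⟨hts, rfl⟩
    · exact .inl (by rw [splice, if_neg h])

theorem one_le_length_splice (g : F) (t : Tm F γ) : 1 ≤ (splice g t).length := by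
  rcases splice_eq_singleton_or g t with h | ⟨h, -⟩
  · rw [h, List.length_singleton]
  · omega

theorem length_le_length_flatMap_splice (g : F) (ts : List (Tm F γ)) :
    ts.length ≤ (ts.flatMap (splice g)).length := by
  induction ts with
  | nil => simp
  | cons t ts ih =>
    rw [List.flatMap_cons, List.length_append, List.length_cons]
    have := one_le_length_splice g t
    omega

theorem aeq_flatMap_splice {SA : Set F} {g : F} (hg : g ∈ SA) {ts : List (Tm F γ)}
    (hts : 2 ≤ ts.length) : AEq SA (.app g ts) (.app g (ts.flatMap (splice g))) := by
  suffices H : ∀ us, 2 ≤ us.length + ts.length →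
      AEq SA (.app g (us ++ ts)) (.app g (us ++ ts.flatMap (splice g))) from
    H [] (by simpa using hts)
  clear hts
  induction ts with
  | nil => exact fun us _ => .refl
  | cons t ts ih =>
    intro us hlen
    rw [List.length_cons] at hlen
    have hpos := one_le_length_splice g t
    have hrest := ih (us ++ splice g t) (by rw [List.length_append]; omega)
    rw [List.append_assoc, List.append_assoc, ← List.flatMap_cons] at hrest
    refine ReflTransGen.trans ?_ hrest
    rcases splice_eq_singleton_or g t with h | ⟨h, ht⟩
    · rw [h]
      exact .refl
    · exact AEq.of_ASax ⟨g, us, splice g t, ts, hg, h, by omega, by rw [← ht], by simp⟩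

section FreeGroupEvaluation

variable {SA : Set F} {fG iG : F} {one : γ}

open scoped Classical in
/-- The interpretation of the function symbols in the free group over terms.  Only `iG` with one
argument and `fG` with at least two are interpreted as group operations.  Any other application is
a generator, flattened when its symbol is associative. -/
noncomputable def freeGroupOp (SA : Set F) (fG iG : F) (one : γ) (g : F)
    (ws : List (FreeGroup (Tm F γ))) : FreeGroup (Tm F γ) :=
  if g = iG ∧ ws.length = 1 then ws.prod⁻¹
  else if g = fG ∧ 2 ≤ ws.length then ws.prod
  else if g ∈ SA ∧ 2 ≤ ws.length then
    .of (.app g ((ws.map (freeGroupTm fG iG one)).flatMap (splice g)))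
  else .of (.app g (ws.map (freeGroupTm fG iG one)))

open scoped Classical in
/-- The value of a term in the free group over terms; its reduced word spells the normal form. -/
noncomputable def freeGroupEval (SA : Set F) (fG iG : F) (one : γ) : Tm F γ → FreeGroup (Tm F γ) :=
  evalTm (freeGroupOp SA fG iG one) (fun c => if c = one then 1 else .of (.cst c))
    (fun n => .of (.var n))

theorem freeGroupEval_var (n : ℕ) :
    freeGroupEval SA fG iG one (.var n) = .of (.var n) := by
  rw [freeGroupEval, evalTm]

open scoped Classical in
theorem freeGroupEval_cst (c : γ) :
    freeGroupEval SA fG iG one (.cst c) = if c = one then 1 else .of (.cst c) := by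
  rw [freeGroupEval, evalTm]

theorem freeGroupEval_app (g : F) (ts : List (Tm F γ)) :
    freeGroupEval SA fG iG one (.app g ts) =
      freeGroupOp SA fG iG one g (ts.map (freeGroupEval SA fG iG one)) :=
  evalTm_app g ts

theorem freeGroupEval_eq_of_ASax (s t : Tm F γ) (h : ASax SA s t) :
    freeGroupEval SA fG iG one s = freeGroupEval SA fG iG one t := by
  classical
  obtain ⟨f, us, ws, vs, hf, hws, huv, rfl, rfl⟩ := h
  have hop {ts : List (FreeGroup (Tm F γ))} (hts : 2 ≤ ts.length) :
      freeGroupOp SA fG iG one f ts = if f = fG then ts.prod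
        else .of (.app f ((ts.map (freeGroupTm fG iG one)).flatMap (splice f))) := by
    rw [freeGroupOp, if_neg (by omega)]
    simp only [hts, hf, and_true, if_true]
  rw [freeGroupEval_app, freeGroupEval_app, hop (by simp; omega), hop (by simp; omega)]
  simp only [List.map_append, List.map_cons, freeGroupEval_app]
  rw [hop (by simpa using hws)]
  split_ifs with hfG
  · simp
  · have hlen := length_le_length_flatMap_splice f
      ((ws.map (freeGroupEval SA fG iG one)).map (freeGroupTm fG iG one))
    rw [List.length_map, List.length_map] at hlen
    simp only [List.flatMap_append, List.flatMap_cons, freeGroupTm_of,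
      splice_app (hws.trans hlen), List.append_assoc]

theorem GroupStep.freeGroupEval_eq {s t : Tm F γ} (h : GroupStep fG iG one s t) :
    freeGroupEval SA fG iG one s = freeGroupEval SA fG iG one t := by
  have hone : freeGroupEval SA fG iG one (.cst one) = 1 := by rw [freeGroupEval_cst, if_pos rfl]
  have hmul (x y : Tm F γ) : freeGroupEval SA fG iG one (.app fG [x, y]) =
      freeGroupEval SA fG iG one x * freeGroupEval SA fG iG one y := by
    simp [freeGroupEval_app, freeGroupOp]
  have hinv (x : Tm F γ) : freeGroupEval SA fG iG one (.app iG [x]) =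
      (freeGroupEval SA fG iG one x)⁻¹ := by
    simp [freeGroupEval_app, freeGroupOp]
  cases h <;> simp [hone, hmul, hinv]

theorem modRed_freeGroupOp (hfG : fG ∈ SA) (g : F) (ws : List (FreeGroup (Tm F γ))) :
    ModRed SA (RGrules fG iG one) (.app g (ws.map (freeGroupTm fG iG one)))
      (freeGroupTm fG iG one (freeGroupOp SA fG iG one g ws)) := by
  rw [freeGroupOp]
  split_ifs with hinv hmul hassoc
  · obtain ⟨rfl, hlen⟩ := hinv
    obtain ⟨w, rfl⟩ := List.length_eq_one_iff.mp hlen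
    rw [List.prod_singleton]
    exact modRed_freeGroupTm_inv hfG w
  · obtain ⟨rfl, hlen⟩ := hmul
    rw [← prodTm_of_two_le g one (by simpa using hlen)]
    exact modRed_freeGroupTm_prod hfG ws
  · rw [freeGroupTm_of]
    exact .of_aeq (aeq_flatMap_splice hassoc.1 (by simpa using hassoc.2))
  · rw [freeGroupTm_of]
    exact .refl _

theorem modRed_freeGroupEval (hfG : fG ∈ SA) (t : Tm F γ) :
    ModRed SA (RGrules fG iG one) t (freeGroupTm fG iG one (freeGroupEval SA fG iG one t)) := by
  induction t using Tm.induction with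
  | var n =>
    rw [freeGroupEval_var, freeGroupTm_of]
    exact .refl _
  | cst c =>
    rw [freeGroupEval_cst]
    split_ifs with hc
    · rw [hc, freeGroupTm_one]
      exact .refl _
    · rw [freeGroupTm_of]
      exact .refl _
  | app g ts ih =>
    rw [freeGroupEval_app]
    refine (ModRed.app_congr g ?_).trans (modRed_freeGroupOp hfG g _)
    rwa [List.map_map, List.forall₂_map_right_iff, List.forall₂_same]

theorem confluentModAOn_RGrules (iG : F) (one : γ) (hfG : fG ∈ SA) (P : Tm F γ → Prop) :
    ConfluentModAOn SA (RGrules fG iG one) P :=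
  confluentModAOn_of_normalizer (fun t => freeGroupTm fG iG one (freeGroupEval SA fG iG one t))
    (fun _ _ h => congrArg (freeGroupTm fG iG one)
      (evalTm_eq_of_rewA freeGroupEval_eq_of_ASax
        (fun _ _ hstep => (ruleStep_RGrules_iff.1 hstep).freeGroupEval_eq) h))
    (modRed_freeGroupEval hfG) P

end FreeGroupEvaluation

theorem RG_convergent_modulo_A_general (SA : Set F) (fG iG : F) (one : γ) (hfG : fG ∈ SA)
    (P : Tm F γ → Prop) :
    TerminatingOn (RewA SA (RGrules fG iG one)) P ∧
    ConfluentModAOn SA (RGrules fG iG one) P :=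
  ⟨terminatingOn_RGrules iG one hfG P, confluentModAOn_RGrules iG one hfG P⟩

/-- Lemma 2.1: the rewrite system `R(G)` for the group axioms is convergent
modulo `A`: the rewrite relation `→_{R(G)/A}` on associatively flat terms is
both terminating and confluent. -/
theorem RG_convergent_modulo_A
    {F γ : Type} [Finite F] (SA : Set F) (fG iG : F) (one : γ)
    (hfG : fG ∈ SA) (hiG : iG ∉ SA) (hfi : fG ≠ iG) :
    TerminatingOn (RewA SA (RGrules fG iG one)) (Flat SA) ∧
    ConfluentModAOn SA (RGrules fG iG one) (Flat SA) :=
  RG_convergent_modulo_A_general SA fG iG one hfG (Flat SA)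

end CCModG
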